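/- There exists N₀ ∈ ℕ such that for every finitely supported u : ℤ² → [0,∞) with |supp u| = N ≥ N₀, the Schwarz rearrangement u* = R_{ℤ²} u satisfies V◇_{L₁} ⊆ supp u* ⊆ V□_{L₂}, where L₁ = ⌊(√N − 5)/2⌋ and L₂ = ⌈√(N/2)⌉ + 2. -/

import Mathlib

open Filter Topology

noncomputable section

abbrev ZLat (d : ℕ) := Fin d → ℤ

def stdVec (d : ℕ) (i : Fin d) : Fin d → ℝ := fun j => if j = i then 1 else 0

/-- The set of directions E⃗ ⊆ ℝ^d. -/
def Evec (d : ℕ) : Set (Fin d → ℝ) :=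
  {e | (∃ i, e = stdVec d i) ∨
    (∃ i j : Fin d, i < j ∧ e = fun k => (stdVec d i k + stdVec d j k) / 2) ∨
    (∃ i j : Fin d, i < j ∧ e = fun k => (stdVec d i k - stdVec d j k) / 2)}

/-- A fixed enumeration of E⃗ (for d = 2 it is e₁, e₂, (e₁+e₂)/2, (e₁-e₂)/2). -/
def EvecList (d : ℕ) : List (Fin d → ℝ) :=
  ((List.finRange d).map (stdVec d)) ++
  ((List.finRange d).flatMap fun i => (List.finRange d).filterMap fun j =>
    if i < j then some (fun k => (stdVec d i k + stdVec d j k) / 2) else none) ++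
  ((List.finRange d).flatMap fun i => (List.finRange d).filterMap fun j =>
    if i < j then some (fun k => (stdVec d i k - stdVec d j k) / 2) else none)

/-- The n-th largest value of `u`, counted with multiplicity (1-indexed). -/
def nthLargest {α : Type*} (u : α → NNReal) (n : ℕ) : NNReal :=
  sSup {t | ∃ Ω : Finset α, Ω.card = n ∧ ∀ x ∈ Ω, t ≤ u x}

/-- The 1-indexed position of the point with doubled coordinate `m` in the
spiral order 0, 1, −1, 2, −2, … (for even m) resp. 1/2, −1/2, 3/2, −3/2, … (for odd m). -/
def posIdx (m : ℤ) : ℕ := (if 0 < m then m else 1 - m).toNat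

/-- `x` and `y` lie on a common line with direction `e`. -/
def sameLine {d : ℕ} (e : Fin d → ℝ) (x y : ZLat d) : Prop :=
  ∃ c : ℝ, (fun i => (x i : ℝ) - (y i : ℝ)) = c • e

/-- Twice the inner product ⟨e, x⟩, as an integer. -/
def pairing {d : ℕ} (e : Fin d → ℝ) (x : ZLat d) : ℤ :=
  ⌊2 * ∑ i, e i * (x i : ℝ)⌋

/-- One-step rearrangement `R_e`. -/
def stepR {d : ℕ} (e : Fin d → ℝ) (u : ZLat d → NNReal) : ZLat d → NNReal :=
  fun x => nthLargest (fun y : {y : ZLat d // sameLine e x y} => u y.1) (posIdx (pairing e x))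

/-- `R^k u` : k successive one-step rearrangements cycling through the fixed enumeration. -/
def iterR (d : ℕ) (u : ZLat d → NNReal) : ℕ → ZLat d → NNReal
  | 0 => u
  | k + 1 => stepR ((EvecList d).getD (k % (EvecList d).length) 0) (iterR d u k)

/-- The Schwarz rearrangement on ℤ^d : pointwise limit of `R^k u`. -/
def RZd (d : ℕ) (u : ZLat d → NNReal) : ZLat d → NNReal :=
  fun x => limUnder atTop fun k => iterR d u k x

def Admissible {α : Type*} (u : α → NNReal) : Prop :=
  ∀ t : NNReal, 0 < t → {x | t < u x}.Finite

def Equimeasurable {α : Type*} (u v : α → NNReal) : Prop :=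
  ∀ t : NNReal, 0 < t → Nonempty ({x | t < u x} ≃ {x | t < v x})

/-- Graph distance (ℓ¹ distance) on the lattice ℤ^d. -/
def latDist {d : ℕ} (x y : ZLat d) : ℕ := ∑ i, (x i - y i).natAbs

/-- The i-th standard basis vector of ℤ^d. -/
def latE {d : ℕ} (i : Fin d) : ZLat d := fun j => if j = i then 1 else 0

/-- ‖∇u‖_p^p : the p-Sobolev energy, summing over each edge {x, x+e_i} once. -/
def gradEnergy (d : ℕ) (p : ℝ) (u : ZLat d → NNReal) : ENNReal :=
  ∑' (x : ZLat d) (i : Fin d), ENNReal.ofReal (|(u (x + latE i) : ℝ) - (u x : ℝ)| ^ p)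

/-- ‖∇u‖_p. -/
def gradNorm (d : ℕ) (p : ℝ) (u : ZLat d → NNReal) : ENNReal :=
  gradEnergy d p u ^ (1 / p)

/-- Graph automorphism of the lattice graph ℤ^d. -/
def IsLatAuto {d : ℕ} (σ : ZLat d ≃ ZLat d) : Prop :=
  ∀ x y : ZLat d, latDist (σ x) (σ y) = 1 ↔ latDist x y = 1

def Supermodular (G : NNReal → NNReal → NNReal) : Prop :=
  ∀ s t s₀ t₀ : NNReal, G (s + s₀) t + G s (t + t₀) ≤ G (s + s₀) (t + t₀) + G s t

def StrictlySupermodular (G : NNReal → NNReal → NNReal) : Prop :=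
  ∀ s t s₀ t₀ : NNReal, 0 < s₀ → 0 < t₀ →
    G (s + s₀) t + G s (t + t₀) < G (s + s₀) (t + t₀) + G s t

/-- The values of `u` are strictly decreasing: a₁ > a₂ > a₃ > ⋯ . -/
def StrictRan {α : Type*} (u : α → NNReal) : Prop :=
  ∀ n : ℕ, 0 < n → nthLargest u (n + 1) < nthLargest u n


def VdiaI (d : ℕ) (l : ℤ) : Set (ZLat d) := {y | (∑ i, (y i).natAbs : ℤ) ≤ l}

def VboxI (d : ℕ) (l : ℤ) : Set (ZLat d) := {y | ∀ i, |y i| ≤ l}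

/-!
A one-step rearrangement acts on every superlevel set separately: on each line it replaces the
points of the set by equally many points at the beginning of the spiral order. The weight
`(d + 1) |x|² - ⟨(d, d - 1, …, 1), x⟩` increases with the spiral order on the lines of all
directions at once, so a step lowers the total weight of every finite set that it changes. A
function of finite support has finitely many superlevel sets, hence its iterates become stationary.
The support of the limit has the original cardinality `N` and meets every line in an initial segment
of the spiral order.

In the plane such a set contains, with a point of sup-norm `m`, the point `(m, 0)`, and moving first
along the antidiagonal and then towards the axes it contains the whole diamond of radius `m - 2`.
A diamond of radius `l` has at least `(l + 1)² + l²` points, which bounds `m` in terms of `N`.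
A box of radius `l` has `(2 l + 1)²` points, so a point of large sup-norm exists when `N` is large.
-/

section Finset

open Finset

theorem exists_equiv_sdiff_of_card_filter_eq {α ι : Type*} [DecidableEq α] [DecidableEq ι]
    {A B : Finset α} (π : α → ι) (h : ∀ i, #{x ∈ A | π x = i} = #{x ∈ B | π x = i}) :
    ∃ f : ↥(A \ B) ≃ ↥(B \ A), ∀ x, π (f x) = π x := by
  have card_fiber (s : Finset α) (i : ι) : Nat.card {x : ↥s // π x = i} = #{x ∈ s | π x = i} :=
    (Nat.card_congr (Equiv.subtypeSubtypeEquivSubtypeInter (· ∈ s) (π · = i))).trans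
      (Nat.subtype_card _ fun _ => mem_filter)
  have filter_sdiff (s t : Finset α) (i : ι) :
      {x ∈ s \ t | π x = i} = {x ∈ s | π x = i} \ {x ∈ t | π x = i} := by
    grind
  have fiber_equiv (i : ι) :
      Nonempty ({x : ↥(A \ B) // π x = i} ≃ {x : ↥(B \ A) // π x = i}) := by
    rw [← Finite.card_eq, card_fiber, card_fiber, filter_sdiff, filter_sdiff]
    exact card_sdiff_comm (h i)
  exact ⟨Equiv.ofFiberEquiv fun i => (fiber_equiv i).some,
    Equiv.ofFiberEquiv_map (f := fun x : ↥(A \ B) => π x) (g := fun x : ↥(B \ A) => π x) _⟩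

theorem card_eq_of_card_filter_eq {α ι : Type*} [DecidableEq ι]
    {A B : Finset α} (π : α → ι) (h : ∀ i, #{x ∈ A | π x = i} = #{x ∈ B | π x = i}) :
    #A = #B := by
  classical
  obtain ⟨f, -⟩ := exists_equiv_sdiff_of_card_filter_eq π h
  rw [← card_sdiff_add_card_inter A B, card_eq_of_equiv f, inter_comm,
    card_sdiff_add_card_inter]

theorem sum_lt_sum_of_card_filter_eq {α ι : Type*} [DecidableEq ι] {A B : Finset α} (π : α → ι)
    (w : α → ℕ) (h : ∀ i, #{x ∈ A | π x = i} = #{x ∈ B | π x = i})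
    (hw : ∀ x ∈ A, x ∉ B → ∀ y ∈ B, y ∉ A → π x = π y → w x < w y) (hne : A ≠ B) :
    ∑ x ∈ A, w x < ∑ x ∈ B, w x := by
  classical
  obtain ⟨f, hf⟩ := exists_equiv_sdiff_of_card_filter_eq π h
  have hnonempty : (A \ B).Nonempty :=
    sdiff_nonempty.2 fun hsub =>
      hne (eq_of_subset_of_card_le hsub (card_eq_of_card_filter_eq π h).ge)
  rw [← sum_sdiff_lt_sum_sdiff, ← sum_coe_sort (A \ B), ← sum_coe_sort (B \ A),
    ← Equiv.sum_comp f]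
  refine sum_lt_sum_of_nonempty (univ_nonempty_iff.2 hnonempty.to_subtype) fun x _ => ?_
  obtain ⟨hxA, hxB⟩ := mem_sdiff.1 x.2
  obtain ⟨hyB, hyA⟩ := mem_sdiff.1 (f x).2
  exact hw x hxA hxB (f x) hyB hyA (hf x).symm

end Finset

theorem eventuallyConst_of_lt_of_ne {β γ : Type*} [PartialOrder γ] [WellFoundedLT γ]
    (f : β → γ) {a : ℕ → β} (h : ∀ k, a (k + 1) ≠ a k → f (a (k + 1)) < f (a k)) :
    EventuallyConst a atTop := by
  have hanti : Antitone (f ∘ a) := antitone_nat_of_succ_le fun k => by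
    by_cases hk : a (k + 1) = a k
    · exact (congrArg f hk).le
    · exact (h k hk).le
  obtain ⟨K, hK⟩ := WellFoundedLT.antitone_chain_condition hanti
  refine eventuallyConst_atTop_nat.2 ⟨K, fun k hk => ?_⟩
  by_contra hne
  exact (h k hne).ne ((hK (k + 1) (by omega)).symm.trans (hK k hk))

theorem lt_nthLargest_iff {α : Type*} {u : α → NNReal} (hu : BddAbove (Set.range u)) {n : ℕ}
    (hn : n ≠ 0) {t : NNReal} :
    t < nthLargest u n ↔ ∃ Ω : Finset α, Ω.card = n ∧ ∀ x ∈ Ω, t < u x := by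
  have nonempty_of_card {Ω : Finset α} (hΩ : Ω.card = n) : Ω.Nonempty :=
    Finset.card_ne_zero.1 (hΩ ▸ hn)
  constructor
  · intro h
    obtain ⟨s, ⟨Ω, hΩ, hs⟩, hts⟩ := exists_lt_of_lt_csSup' h
    exact ⟨Ω, hΩ, fun x hx => hts.trans_le (hs x hx)⟩
  · rintro ⟨Ω, hΩ, ht⟩
    obtain ⟨x, hx, hmin⟩ := Finset.exists_min_image Ω u (nonempty_of_card hΩ)
    refine (ht x hx).trans_le (le_csSup ?_ ⟨Ω, hΩ, hmin⟩)
    obtain ⟨M, hM⟩ := hu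
    refine ⟨M, ?_⟩
    rintro s ⟨Ω', hΩ', hs⟩
    obtain ⟨y, hy⟩ := nonempty_of_card hΩ'
    exact (hs y hy).trans (hM ⟨y, rfl⟩)

theorem bddAbove_range_of_finite_setOf_lt {α β : Type*} [LinearOrder β] {u : α → β} {t : β}
    (h : {x | t < u x}.Finite) : BddAbove (Set.range u) := by
  have : Nonempty β := ⟨t⟩
  refine ((bddAbove_Iic (a := t)).union (h.image u).bddAbove).mono
    (Set.range_subset_iff.2 fun x => ?_)
  exact (le_or_gt (u x) t).imp id fun hx => Set.mem_image_of_mem u hx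


/-- A partition of `α` into infinite lines, each of them enumerated by `rank` as `1, 2, 3, …`. It
is what a one-step rearrangement needs to know about a direction. -/
structure RankedPartition (α : Type*) extends Setoid α where
  rank : α → ℕ
  bijOn_rank : ∀ x, Set.BijOn rank {y | r x y} (Set.Ici 1)

namespace RankedPartition

variable {α : Type*} (P : RankedPartition α)

/-- The rearrangement of a function along the lines of `P`: its values on each line are sorted in
decreasing order of rank. -/
def rearrange (u : α → NNReal) (x : α) : NNReal :=
  nthLargest (fun y : {y : α // P.r x y} => u y) (P.rank x)

open Classical in
/-- The points of `A` on the line of `x`. -/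
def lineThrough (A : Finset α) (x : α) : Finset α := A.filter (P.r x)

variable {P} {A : Finset α} {u : α → NNReal} {x y : α}

theorem mem_lineThrough : y ∈ P.lineThrough A x ↔ y ∈ A ∧ P.r x y := by
  classical exact Finset.mem_filter

theorem lineThrough_eq_of_rel (h : P.r x y) : P.lineThrough A x = P.lineThrough A y := by
  ext z
  rw [mem_lineThrough, mem_lineThrough]
  exact and_congr_right fun _ => ⟨P.iseqv.trans (P.iseqv.symm h), P.iseqv.trans h⟩

theorem filter_mk_eq_lineThrough [DecidableEq (Quotient P.toSetoid)] :
    A.filter (fun y => Quotient.mk P.toSetoid y = Quotient.mk P.toSetoid x) =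
      P.lineThrough A x := by
  ext y
  rw [Finset.mem_filter, mem_lineThrough, Quotient.eq]
  exact and_congr_right fun _ => ⟨P.iseqv.symm, P.iseqv.symm⟩

theorem one_le_rank (x : α) : 1 ≤ P.rank x :=
  (P.bijOn_rank x).mapsTo (P.iseqv.refl x)

theorem finite_setOf_rank_le_card_lineThrough (P : RankedPartition α) (A : Finset α) :
    {x | P.rank x ≤ (P.lineThrough A x).card}.Finite := by
  have hline (a : α) : {x | P.r a x ∧ P.rank x ≤ (P.lineThrough A a).card}.Finite :=
    Set.Finite.of_injOn (f := P.rank) (t := Set.Iic (P.lineThrough A a).card) (fun x hx => hx.2)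
      ((P.bijOn_rank a).injOn.mono fun x hx => hx.1) (Set.finite_Iic _)
  refine (A.finite_toSet.biUnion fun a _ => hline a).subset fun x hx => ?_
  obtain ⟨a, ha⟩ := Finset.card_pos.1 ((one_le_rank x).trans hx)
  obtain ⟨haA, hxa⟩ := mem_lineThrough.1 ha
  refine Set.mem_biUnion haA ⟨P.iseqv.symm hxa, ?_⟩
  rwa [← lineThrough_eq_of_rel hxa]

variable (P) in
/-- The rearrangement of a finite set: on each line, the points of `A` are replaced by equally many
points of lowest rank. -/
def compress (A : Finset α) : Finset α := (P.finite_setOf_rank_le_card_lineThrough A).toFinset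

theorem mem_compress : x ∈ P.compress A ↔ P.rank x ≤ (P.lineThrough A x).card :=
  Set.Finite.mem_toFinset _

theorem card_lineThrough_compress :
    (P.lineThrough (P.compress A) x).card = (P.lineThrough A x).card := by
  have hmem (y : α) : y ∈ P.lineThrough (P.compress A) x ↔
      P.r x y ∧ P.rank y ≤ (P.lineThrough A x).card := by
    rw [mem_lineThrough, mem_compress, and_comm]
    exact and_congr_right fun h => by rw [lineThrough_eq_of_rel h]
  rw [Finset.card_nbij (t := Finset.Icc 1 (P.lineThrough A x).card) P.rank, Nat.card_Icc,
    Nat.add_sub_cancel]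
  · exact fun y hy => Finset.mem_coe.2 (Finset.mem_Icc.2 ⟨one_le_rank y, ((hmem y).1 hy).2⟩)
  · exact (P.bijOn_rank x).injOn.mono fun y hy => ((hmem y).1 hy).1
  · intro n hn
    obtain ⟨hn1, hn⟩ := Finset.mem_Icc.1 hn
    obtain ⟨y, hxy, rfl⟩ := (P.bijOn_rank x).surjOn hn1
    exact ⟨y, (hmem y).2 ⟨hxy, hn⟩, rfl⟩

theorem card_filter_mk_compress [DecidableEq (Quotient P.toSetoid)] (q : Quotient P.toSetoid) :
    ((P.compress A).filter (fun y => Quotient.mk P.toSetoid y = q)).card =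
      (A.filter (fun y => Quotient.mk P.toSetoid y = q)).card := by
  induction q using Quotient.inductionOn with
  | h x => rw [filter_mk_eq_lineThrough, filter_mk_eq_lineThrough, card_lineThrough_compress]

theorem card_compress : (P.compress A).card = A.card := by
  classical exact card_eq_of_card_filter_eq (Quotient.mk P.toSetoid) card_filter_mk_compress

theorem sum_compress_lt {w : α → ℕ} (hw : ∀ x y, P.r x y → P.rank x < P.rank y → w x < w y)
    (hne : P.compress A ≠ A) : ∑ x ∈ P.compress A, w x < ∑ x ∈ A, w x := by
  classical
  refine sum_lt_sum_of_card_filter_eq (Quotient.mk P.toSetoid) w card_filter_mk_compress ?_ hne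
  intro x hx _ y _ hy hxy
  have hrel : P.r x y := Quotient.exact hxy
  rw [mem_compress, lineThrough_eq_of_rel hrel] at hx
  rw [mem_compress, not_le] at hy
  exact hw x y hrel (hx.trans_lt hy)

theorem lt_rearrange_iff {t : NNReal} (hA : ∀ y, y ∈ A ↔ t < u y) :
    t < P.rearrange u x ↔ x ∈ P.compress A := by
  classical
  have hbdd : BddAbove (Set.range fun y : {y // P.r x y} => u y) :=
    (bddAbove_range_of_finite_setOf_lt (t := t)
      (A.finite_toSet.subset fun y hy => (hA y).2 hy)).mono (Set.range_comp_subset_range _ u)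
  rw [rearrange, lt_nthLargest_iff hbdd (Nat.one_le_iff_ne_zero.1 (one_le_rank x)), mem_compress,
    Finset.le_card_iff_exists_subset_card]
  constructor
  · rintro ⟨Ω, hcard, hΩ⟩
    refine ⟨Ω.map (Function.Embedding.subtype _), fun y hy => ?_, (Finset.card_map _).trans hcard⟩
    obtain ⟨z, hz, rfl⟩ := Finset.mem_map.1 hy
    exact mem_lineThrough.2 ⟨(hA _).2 (hΩ z hz), z.2⟩
  · rintro ⟨Ω, hsub, hcard⟩
    have hΩ (y : α) (hy : y ∈ Ω) : y ∈ A ∧ P.r x y := mem_lineThrough.1 (hsub hy)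
    refine ⟨Ω.subtype (P.r x), ?_, fun y hy => (hA y).1 (hΩ y (Finset.mem_subtype.1 hy)).1⟩
    rwa [Finset.card_subtype, Finset.filter_true_of_mem fun y hy => (hΩ y hy).2]

theorem lt_rearrange_of_rank_le {t : NNReal} (hu : {z | t < u z}.Finite) (hrel : P.r x y)
    (hrank : P.rank y ≤ P.rank x) (hx : t < P.rearrange u x) : t < P.rearrange u y := by
  have hA (z : α) : z ∈ hu.toFinset ↔ t < u z := hu.mem_toFinset
  rw [lt_rearrange_iff hA, mem_compress] at hx ⊢
  exact hrank.trans (lineThrough_eq_of_rel hrel ▸ hx)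

/-- The result of compressing `A` successively along `P 0, P 1, …, P (k - 1)`. -/
def iterCompress (P : ℕ → RankedPartition α) (A : Finset α) : ℕ → Finset α
  | 0 => A
  | k + 1 => (P k).compress (iterCompress P A k)

theorem card_iterCompress (P : ℕ → RankedPartition α) (A : Finset α) (k : ℕ) :
    (iterCompress P A k).card = A.card := by
  induction k with
  | zero => rfl
  | succ k ih => exact card_compress.trans ih

theorem eventuallyConst_iterCompress {P : ℕ → RankedPartition α} {w : α → ℕ}
    (hw : ∀ k x y, (P k).r x y → (P k).rank x < (P k).rank y → w x < w y) (A : Finset α) :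
    EventuallyConst (iterCompress P A) atTop :=
  eventuallyConst_of_lt_of_ne (fun B => ∑ x ∈ B, w x) fun k => sum_compress_lt (hw k)

theorem lt_iterate_rearrange_iff {P : ℕ → RankedPartition α} {u : ℕ → α → NNReal}
    (hu : ∀ k, u (k + 1) = (P k).rearrange (u k)) {t : NNReal} (hA : ∀ x, x ∈ A ↔ t < u 0 x)
    (k : ℕ) (x : α) : t < u k x ↔ x ∈ iterCompress P A k := by
  induction k generalizing x with
  | zero => exact (hA x).symm
  | succ k ih => rw [hu, lt_rearrange_iff fun y => (ih y).symm, iterCompress]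

theorem eventuallyConst_iterate_rearrange {P : ℕ → RankedPartition α} {w : α → ℕ}
    (hw : ∀ k x y, (P k).r x y → (P k).rank x < (P k).rank y → w x < w y)
    {u : ℕ → α → NNReal} (hu : ∀ k, u (k + 1) = (P k).rearrange (u k))
    (hfin : (Function.support (u 0)).Finite) : EventuallyConst u atTop := by
  classical
  set S := hfin.toFinset with hS
  -- Every superlevel set of `u 0` is one of the finitely many subsets of `S`, so there is a step
  -- after which none of them moves.
  have hstep : ∀ᶠ k in atTop, ∀ A ∈ S.powerset,
      iterCompress P A (k + 1) = iterCompress P A k :=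
    (eventually_all_finset _).2 fun A _ => eventually_atTop.2
      (eventuallyConst_atTop_nat.1 (eventuallyConst_iterCompress hw A))
  obtain ⟨K, hK⟩ := eventually_atTop.1 hstep
  refine eventuallyConst_atTop_nat.2 ⟨K, fun k hk => funext fun x =>
    eq_of_forall_lt_iff fun t => ?_⟩
  have hA (y : α) : y ∈ S.filter (t < u 0 ·) ↔ t < u 0 y := by
    rw [Finset.mem_filter, hS, hfin.mem_toFinset, and_iff_right_iff_imp]
    exact fun h => (zero_le.trans_lt h).ne'
  rw [lt_iterate_rearrange_iff hu hA, lt_iterate_rearrange_iff hu hA,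
    hK k hk _ (Finset.mem_powerset.2 (Finset.filter_subset _ _))]

theorem support_iterate_rearrange {P : ℕ → RankedPartition α}
    {u : ℕ → α → NNReal} (hu : ∀ k, u (k + 1) = (P k).rearrange (u k))
    (hfin : (Function.support (u 0)).Finite) (k : ℕ) :
    Function.support (u k) = iterCompress P hfin.toFinset k := by
  ext x
  rw [Function.mem_support, ← pos_iff_ne_zero, Finset.mem_coe]
  exact lt_iterate_rearrange_iff hu (fun y => by simp [pos_iff_ne_zero]) k x

end RankedPartition


section SpiralOrder

theorem bijOn_posIdx (a : ℤ) : Set.BijOn posIdx {m | m ≡ a [ZMOD 2]} (Set.Ici 1) := by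
  refine ⟨fun m _ => ?_, fun m hm m' hm' h => ?_, fun n hn => ?_⟩
  · simp only [posIdx, Set.mem_Ici]
    split_ifs <;> omega
  · simp only [Set.mem_ofPred_eq, Int.ModEq] at hm hm'
    simp only [posIdx] at h
    split_ifs at h <;> omega
  · refine ⟨if (n : ℤ) % 2 = a % 2 then n else 1 - n, ?_, ?_⟩
    · simp only [Set.mem_ofPred_eq, Int.ModEq]
      split_ifs <;> omega
    · simp only [Set.mem_Ici] at hn
      simp only [posIdx]
      split_ifs <;> omega

theorem sign_of_posIdx_lt_posIdx_add {m n : ℤ} (h : posIdx m < posIdx (m + 2 * n)) :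
    0 < n ∧ 0 < n + m ∨ n < 0 ∧ n + m ≤ 0 := by
  simp only [posIdx] at h
  split_ifs at h <;> omega

theorem posIdx_le_posIdx {m m' : ℤ} (h : |m| < |m'| ∨ m = |m'|) : posIdx m ≤ posIdx m' := by
  simp only [posIdx]
  rcases abs_cases m with ⟨hm, _⟩ | ⟨hm, _⟩ <;> rcases abs_cases m' with ⟨hm', _⟩ | ⟨hm', _⟩ <;>
    rw [hm, hm'] at h <;> split_ifs <;> omega

end SpiralOrder

section Directions

open scoped Matrix

variable {d : ℕ} {e : Fin d → ℝ} {v x y : ZLat d}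

/-- `v` is the lattice vector generating the direction `e`. The normalisation is `e = v / |v|²` with
`|v|² ∈ {1, 2}`, and the entry `1` makes `v` primitive. -/
structure IsGenerator (e : Fin d → ℝ) (v : ZLat d) : Prop where
  smul_eq : ((v ⬝ᵥ v : ℤ) : ℝ) • e = fun i => (v i : ℝ)
  dvd_two : v ⬝ᵥ v ∣ 2
  exists_eq_one : ∃ i, v i = 1

namespace IsGenerator

theorem dotProduct_self_pos (h : IsGenerator e v) : 0 < v ⬝ᵥ v :=
  lt_of_le_of_ne (Finset.sum_nonneg fun i _ => mul_self_nonneg (v i))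
    (ne_zero_of_dvd_ne_zero two_ne_zero h.dvd_two).symm

theorem dotProduct_self_mul_pairing (h : IsGenerator e v) (x : ZLat d) :
    (v ⬝ᵥ v) * pairing e x = 2 * (v ⬝ᵥ x) := by
  obtain ⟨k, hk⟩ := h.dvd_two
  have hkℝ : (2 : ℝ) = (v ⬝ᵥ v : ℤ) * k := by exact_mod_cast hk
  have hcoord (i : Fin d) : ((v ⬝ᵥ v : ℤ) : ℝ) * e i = v i := congrFun h.smul_eq i
  have hpair : pairing e x = k * (v ⬝ᵥ x) := by
    have hreal : 2 * ∑ i, e i * (x i : ℝ) = ((k * (v ⬝ᵥ x) : ℤ) : ℝ) := by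
      rw [dotProduct, Finset.mul_sum, Finset.mul_sum]
      push_cast
      refine Finset.sum_congr rfl fun i _ => ?_
      rw [← hcoord i, hkℝ]
      ring
    rw [pairing, hreal, Int.floor_intCast]
  rw [hpair, ← mul_assoc, ← hk]

theorem pairing_add_zsmul (h : IsGenerator e v) (x : ZLat d) (n : ℤ) :
    pairing e (x + n • v) = pairing e x + 2 * n := by
  apply mul_left_cancel₀ h.dotProduct_self_pos.ne'
  rw [mul_add, h.dotProduct_self_mul_pairing, h.dotProduct_self_mul_pairing, dotProduct_add,
    dotProduct_smul, smul_eq_mul]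
  ring

theorem sameLine_iff (h : IsGenerator e v) : sameLine e x y ↔ ∃ n : ℤ, y = x + n • v := by
  have hpos : (0 : ℝ) < (v ⬝ᵥ v : ℤ) := by exact_mod_cast h.dotProduct_self_pos
  have hcoord (i : Fin d) : ((v ⬝ᵥ v : ℤ) : ℝ) * e i = v i := congrFun h.smul_eq i
  constructor
  · rintro ⟨c, hc⟩
    have hmul (i : Fin d) : (x i - y i : ℝ) * (v ⬝ᵥ v : ℤ) = c * v i := by
      rw [show (x i - y i : ℝ) = c * e i from congrFun hc i, ← hcoord i]
      ring
    obtain ⟨j, hj⟩ := h.exists_eq_one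
    refine ⟨y j - x j, funext fun i => ?_⟩
    have hdiff : ((x i - y i : ℝ)) = (x j - y j) * v i := by
      apply mul_right_cancel₀ hpos.ne'
      have hc_eq := hmul j
      rw [hj, Int.cast_one, mul_one] at hc_eq
      rw [hmul i, ← hc_eq]
      ring
    have hdiffℤ : x i - y i = (x j - y j) * v i := by exact_mod_cast hdiff
    simp only [Pi.add_apply, Pi.smul_apply, smul_eq_mul]
    linarith
  · rintro ⟨n, rfl⟩
    refine ⟨-n * (v ⬝ᵥ v : ℤ), funext fun i => ?_⟩
    simp only [Pi.add_apply, Pi.smul_apply, smul_eq_mul, Int.cast_add, Int.cast_mul, mul_assoc,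
      hcoord i]
    ring

theorem bijOn_pairing (h : IsGenerator e v) (x : ZLat d) :
    Set.BijOn (pairing e) {y | sameLine e x y} {m | m ≡ pairing e x [ZMOD 2]} := by
  refine ⟨fun y hy => ?_, fun y hy z hz hyz => ?_, fun m hm => ?_⟩
  · obtain ⟨n, rfl⟩ := h.sameLine_iff.1 hy
    rw [Set.mem_ofPred_eq, h.pairing_add_zsmul]
    exact Int.ModEq.symm (Int.modEq_iff_dvd.2 (by simp))
  · obtain ⟨n, rfl⟩ := h.sameLine_iff.1 hy
    obtain ⟨n', rfl⟩ := h.sameLine_iff.1 hz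
    rw [h.pairing_add_zsmul, h.pairing_add_zsmul] at hyz
    rw [show n = n' by omega]
  · obtain ⟨n, hn⟩ := (Int.ModEq.symm hm).dvd
    refine ⟨x + n • v, h.sameLine_iff.2 ⟨n, rfl⟩, ?_⟩
    rw [h.pairing_add_zsmul]
    omega

theorem bijOn_posIdx_pairing (h : IsGenerator e v) (x : ZLat d) :
    Set.BijOn (fun y => posIdx (pairing e y)) {y | sameLine e x y} (Set.Ici 1) :=
  (bijOn_posIdx _).comp (h.bijOn_pairing x)

end IsGenerator

theorem sameLine_equivalence (e : Fin d → ℝ) : Equivalence (sameLine e) where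
  refl x := ⟨0, by simp [funext_iff]⟩
  symm := by
    rintro x y ⟨c, hc⟩
    refine ⟨-c, ?_⟩
    rw [neg_smul, ← hc]
    ext i
    simp
  trans := by
    rintro x y z ⟨c, hc⟩ ⟨c', hc'⟩
    refine ⟨c + c', ?_⟩
    rw [add_smul, ← hc, ← hc']
    ext i
    simp

/-- The coefficients `d, d - 1, …, 1` of the linear term of `weight`. -/
def tilt (d : ℕ) : ZLat d := fun i => d - i

/-- A weight on the lattice that increases strictly along the spiral order of every line in a
direction of `Evec d`. The dominant term is `|x|²`, and the linear perturbation `tilt d` breaks the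
ties between opposite points. -/
def weight (x : ZLat d) : ℕ := ∑ i, ((d + 1) * x i ^ 2 - tilt d i * x i).toNat

theorem weight_cast (x : ZLat d) : (weight x : ℤ) = (d + 1) * (x ⬝ᵥ x) - tilt d ⬝ᵥ x := by
  have hnonneg (i : Fin d) : 0 ≤ (d + 1) * x i ^ 2 - tilt d i * x i := by
    have hi : (i : ℤ) < d := by exact_mod_cast i.2
    have hsq : |x i| ≤ x i ^ 2 := by
      rw [← sq_abs]
      exact Int.le_self_sq _
    simp only [tilt]
    nlinarith [le_abs_self (x i), abs_nonneg (x i), sq_nonneg (x i)]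
  rw [weight, Nat.cast_sum, dotProduct, dotProduct, Finset.mul_sum, ← Finset.sum_sub_distrib]
  refine Finset.sum_congr rfl fun i _ => ?_
  rw [Int.toNat_of_nonneg (hnonneg i), sq]

theorem IsGenerator.weight_lt_weight (h : IsGenerator e v) (htilt : 0 < tilt d ⬝ᵥ v)
    (htilt_lt : tilt d ⬝ᵥ v < (d + 1) * (v ⬝ᵥ v)) (hxy : sameLine e x y)
    (hlt : posIdx (pairing e x) < posIdx (pairing e y)) : weight x < weight y := by
  obtain ⟨n, rfl⟩ := h.sameLine_iff.1 hxy
  rw [h.pairing_add_zsmul] at hlt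
  set m := pairing e x
  have hdiff : (weight (x + n • v) : ℤ) - weight x =
      ((d + 1) * (v ⬝ᵥ v)) * (n * (n + m)) - n * (tilt d ⬝ᵥ v) := by
    have hpair := h.dotProduct_self_mul_pairing x
    rw [weight_cast, weight_cast]
    simp only [dotProduct_add, add_dotProduct, dotProduct_smul, smul_dotProduct, smul_eq_mul,
      dotProduct_comm x v]
    linear_combination (-(d + 1) * n : ℤ) * hpair
  suffices 0 < (weight (x + n • v) : ℤ) - weight x by omega
  rw [hdiff]
  rcases sign_of_posIdx_lt_posIdx_add hlt with ⟨hn, hnm⟩ | ⟨hn, hnm⟩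
  · have : n ≤ n * (n + m) := le_mul_of_one_le_right hn.le hnm
    nlinarith
  · have : 0 ≤ n * (n + m) := mul_nonneg_of_nonpos_of_nonpos hn.le hnm
    nlinarith

theorem isGenerator_stdVec (i : Fin d) : IsGenerator (stdVec d i) (Pi.single i 1) where
  smul_eq := by
    ext k
    simp [stdVec, Pi.single_apply]
  dvd_two := by simp
  exists_eq_one := ⟨i, by simp⟩

theorem dotProduct_self_single_add_single {i j : Fin d} (hij : i ≠ j) :
    (Pi.single i 1 + Pi.single j 1 : ZLat d) ⬝ᵥ (Pi.single i 1 + Pi.single j 1) = 2 := by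
  simp [hij, hij.symm]

theorem isGenerator_half_add {i j : Fin d} (hij : i ≠ j) :
    IsGenerator (fun k => (stdVec d i k + stdVec d j k) / 2)
      (Pi.single i 1 + Pi.single j 1) where
  smul_eq := by
    rw [dotProduct_self_single_add_single hij]
    ext k
    simp only [stdVec, Pi.smul_apply, Pi.add_apply, Pi.single_apply, smul_eq_mul]
    push_cast
    ring
  dvd_two := (dotProduct_self_single_add_single hij).dvd
  exists_eq_one := ⟨i, by simp [hij]⟩

theorem dotProduct_self_single_sub_single {i j : Fin d} (hij : i ≠ j) :
    (Pi.single i 1 - Pi.single j 1 : ZLat d) ⬝ᵥ (Pi.single i 1 - Pi.single j 1) = 2 := by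
  simp [hij, hij.symm]

theorem isGenerator_half_sub {i j : Fin d} (hij : i ≠ j) :
    IsGenerator (fun k => (stdVec d i k - stdVec d j k) / 2)
      (Pi.single i 1 - Pi.single j 1) where
  smul_eq := by
    rw [dotProduct_self_single_sub_single hij]
    ext k
    simp only [stdVec, Pi.smul_apply, Pi.sub_apply, Pi.single_apply, smul_eq_mul]
    push_cast
    ring
  dvd_two := (dotProduct_self_single_sub_single hij).dvd
  exists_eq_one := ⟨i, by simp [hij]⟩

theorem exists_isGenerator_of_mem_Evec (he : e ∈ Evec d) :
    ∃ v, IsGenerator e v ∧ 0 < tilt d ⬝ᵥ v ∧ tilt d ⬝ᵥ v < (d + 1) * (v ⬝ᵥ v) := by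
  rcases he with ⟨i, rfl⟩ | ⟨i, j, hij, rfl⟩ | ⟨i, j, hij, rfl⟩
  · refine ⟨_, isGenerator_stdVec i, ?_⟩
    simp [tilt]
  · refine ⟨_, isGenerator_half_add hij.ne, ?_⟩
    rw [dotProduct_self_single_add_single hij.ne, dotProduct_add, dotProduct_single_one,
      dotProduct_single_one]
    simp only [tilt]
    omega
  · refine ⟨_, isGenerator_half_sub hij.ne, ?_⟩
    rw [dotProduct_self_single_sub_single hij.ne, dotProduct_sub, dotProduct_single_one,
      dotProduct_single_one]
    simp only [tilt]
    omega

theorem neZero_of_mem_Evec (he : e ∈ Evec d) : NeZero d := by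
  obtain ⟨v, hv, -⟩ := exists_isGenerator_of_mem_Evec he
  obtain ⟨i, -⟩ := hv.exists_eq_one
  exact ⟨i.pos.ne'⟩

end Directions


section Limit

variable {d : ℕ} {e : Fin d → ℝ} {u : ZLat d → NNReal}

/-- The partition of `ℤ^d` into the lines of direction `e`, in spiral order. -/
def directionPartition (he : e ∈ Evec d) : RankedPartition (ZLat d) where
  r := sameLine e
  iseqv := sameLine_equivalence e
  rank y := posIdx (pairing e y)
  bijOn_rank :=
    have ⟨_, hv, _⟩ := exists_isGenerator_of_mem_Evec he
    hv.bijOn_posIdx_pairing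

theorem weight_lt_weight_of_mem_Evec (he : e ∈ Evec d) {x y : ZLat d} (hxy : sameLine e x y)
    (hlt : posIdx (pairing e x) < posIdx (pairing e y)) : weight x < weight y := by
  obtain ⟨v, hv, htilt, htilt_lt⟩ := exists_isGenerator_of_mem_Evec he
  exact hv.weight_lt_weight htilt htilt_lt hxy hlt

theorem mem_EvecList : e ∈ EvecList d ↔ e ∈ Evec d := by
  simp [EvecList, Evec, eq_comm]

/-- The direction of the `k`-th step of the iteration. -/
def stepDirection (d k : ℕ) : Fin d → ℝ := (EvecList d).getD (k % (EvecList d).length) 0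

theorem stepDirection_mem_Evec [NeZero d] (k : ℕ) : stepDirection d k ∈ Evec d := by
  have hlen : 0 < (EvecList d).length :=
    List.length_pos_of_mem (mem_EvecList.2 (Or.inl ⟨0, rfl⟩))
  rw [stepDirection, List.getD_eq_getElem _ _ (Nat.mod_lt _ hlen), ← mem_EvecList]
  exact List.getElem_mem _

theorem exists_ge_stepDirection_eq (he : e ∈ Evec d) (K : ℕ) : ∃ k ≥ K, stepDirection d k = e := by
  obtain ⟨i, hi, rfl⟩ := List.getElem_of_mem (mem_EvecList.2 he)
  refine ⟨i + (EvecList d).length * K, ?_, ?_⟩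
  · nlinarith
  · rw [stepDirection, Nat.add_mul_mod_self_left, Nat.mod_eq_of_lt hi,
      List.getD_eq_getElem _ _ hi]

/-- The line partition used in the `k`-th step of the iteration. -/
def stepPartition (d : ℕ) [NeZero d] (k : ℕ) : RankedPartition (ZLat d) :=
  directionPartition (stepDirection_mem_Evec k)

theorem iterR_succ_eq_rearrange [NeZero d] (u : ZLat d → NNReal) (k : ℕ) :
    iterR d u (k + 1) = (stepPartition d k).rearrange (iterR d u k) := rfl

theorem eventually_iterR_eq_RZd [NeZero d] (hu : (Function.support u).Finite) :
    ∀ᶠ k in atTop, iterR d u k = RZd d u := by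
  have hconst : EventuallyConst (iterR d u) atTop :=
    RankedPartition.eventuallyConst_iterate_rearrange
      (fun k _ _ => weight_lt_weight_of_mem_Evec (stepDirection_mem_Evec k))
      (iterR_succ_eq_rearrange u) hu
  obtain ⟨K, hK⟩ := eventuallyConst_atTop.1 hconst
  have hlim : RZd d u = iterR d u K := funext fun x =>
    (tendsto_const_nhds.congr' (eventually_atTop.2
      ⟨K, fun k hk => (congrFun (hK k hk) x).symm⟩)).limUnder_eq
  exact eventually_atTop.2 ⟨K, fun k hk => (hK k hk).trans hlim.symm⟩

theorem support_RZd [NeZero d] (hu : (Function.support u).Finite) :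
    (Function.support (RZd d u)).Finite ∧
      (Function.support (RZd d u)).ncard = (Function.support u).ncard := by
  obtain ⟨k, hk⟩ := (eventually_iterR_eq_RZd hu).exists
  rw [← hk, RankedPartition.support_iterate_rearrange (iterR_succ_eq_rearrange u) hu,
    Set.ncard_coe_finset, RankedPartition.card_iterCompress, Set.ncard_eq_toFinset_card _ hu]
  exact ⟨Finset.finite_toSet _, rfl⟩

theorem stepR_RZd (hu : (Function.support u).Finite) (he : e ∈ Evec d) :
    stepR e (RZd d u) = RZd d u := by
  have := neZero_of_mem_Evec he
  obtain ⟨K, hK⟩ := eventually_atTop.1 (eventually_iterR_eq_RZd hu)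
  obtain ⟨k, hk, rfl⟩ := exists_ge_stepDirection_eq he K
  rw [← hK (k + 1) (by omega)]
  nth_rw 1 [hK (k + 1) (by omega), ← hK k hk]
  rfl

/-- A set of lattice points meeting every line of direction `e` in an initial segment of the
spiral order. -/
def IsCompressed (e : Fin d → ℝ) (S : Set (ZLat d)) : Prop :=
  ∀ ⦃x⦄, x ∈ S → ∀ ⦃y⦄, sameLine e x y → posIdx (pairing e y) ≤ posIdx (pairing e x) → y ∈ S

theorem isCompressed_support_of_stepR_eq (he : e ∈ Evec d) (hu : (Function.support u).Finite)
    (hfix : stepR e u = u) : IsCompressed e (Function.support u) := by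
  intro x hx y hxy hrank
  have hfix' : (directionPartition he).rearrange u = u := hfix
  have hpos : {z | 0 < u z}.Finite := hu.subset fun z hz => hz.ne'
  rw [Function.mem_support, ← pos_iff_ne_zero, ← hfix'] at hx ⊢
  exact RankedPartition.lt_rearrange_of_rank_le hpos hxy hrank hx

theorem isCompressed_support_RZd (hu : (Function.support u).Finite) (he : e ∈ Evec d) :
    IsCompressed e (Function.support (RZd d u)) :=
  have := neZero_of_mem_Evec he
  isCompressed_support_of_stepR_eq he (support_RZd hu).1 (stepR_RZd hu he)

theorem IsCompressed.add_zsmul_mem {S : Set (ZLat d)} {v x : ZLat d} (hS : IsCompressed e S)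
    (hv : IsGenerator e v) (hx : x ∈ S) (n : ℤ)
    (hn : |pairing e x + 2 * n| < |pairing e x| ∨ pairing e x + 2 * n = |pairing e x|) :
    x + n • v ∈ S := by
  refine hS hx (hv.sameLine_iff.2 ⟨n, rfl⟩) (posIdx_le_posIdx ?_)
  rwa [hv.pairing_add_zsmul]

end Limit

section Counting

theorem VdiaI_mono {d : ℕ} {l l' : ℤ} (h : l ≤ l') : VdiaI d l ⊆ VdiaI d l' :=
  fun _ hy => hy.trans h

theorem ncard_VboxI (d l : ℕ) : (VboxI d l).ncard = (2 * l + 1) ^ d := by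
  have hbox : VboxI d l = (Fintype.piFinset fun _ : Fin d => Finset.Icc (-l : ℤ) l) := by
    ext y
    simp only [VboxI, Set.mem_ofPred_eq, abs_le, Finset.mem_coe, Fintype.mem_piFinset,
      Finset.mem_Icc]
  have hside : (l + 1 - -l : ℤ).toNat = 2 * l + 1 := by omega
  rw [hbox, Set.ncard_coe_finset, Fintype.card_piFinset_const, Int.card_Icc, hside]

theorem finite_VboxI (d l : ℕ) : (VboxI d l).Finite :=
  Set.finite_of_ncard_pos (by rw [ncard_VboxI]; positivity)

/-- `ℤ²` splits by the parity of the diagonal coordinate `x₀ + x₁ - l` into two square grids turned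
by 45°. They meet the diamond in `(l + 1)²` and `l²` points. -/
theorem sq_add_sq_le_ncard_of_VdiaI_subset {S : Set (ZLat 2)} (hS : S.Finite) {l : ℕ}
    (h : VdiaI 2 l ⊆ S) : (l + 1) ^ 2 + l ^ 2 ≤ S.ncard := by
  let grid : ℕ × ℕ ⊕ ℕ × ℕ → ZLat 2 := Sum.elim
    (fun p => ![(p.1 : ℤ) - p.2, (p.1 : ℤ) + p.2 - l])
    (fun p => ![(p.1 : ℤ) - p.2, (p.1 : ℤ) + p.2 - l + 1])
  let T := (Finset.range (l + 1) ×ˢ Finset.range (l + 1)).disjSum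
    (Finset.range l ×ˢ Finset.range l)
  have hcard : T.card = (l + 1) ^ 2 + l ^ 2 := by
    simp only [T, Finset.card_disjSum, Finset.card_product, Finset.card_range, sq]
  have hinj : Function.Injective grid := by
    rintro (⟨a, b⟩ | ⟨a, b⟩) (⟨a', b'⟩ | ⟨a', b'⟩) hab <;>
      have h0 := congrFun hab 0 <;> have h1 := congrFun hab 1 <;>
      simp only [grid, Sum.elim_inl, Sum.elim_inr, Matrix.cons_val_zero, Matrix.cons_val_one]
        at h0 h1 <;>
      grind
  have hmaps : ∀ p ∈ T, grid p ∈ S := by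
    rintro (⟨a, b⟩ | ⟨a, b⟩) hab <;> refine h ?_ <;>
      simp only [T, Finset.inl_mem_disjSum, Finset.inr_mem_disjSum, Finset.mem_product,
        Finset.mem_range] at hab <;>
      simp only [VdiaI, Set.mem_ofPred_eq, Fin.sum_univ_two, grid, Sum.elim_inl, Sum.elim_inr,
        Matrix.cons_val_zero, Matrix.cons_val_one] <;>
      omega
  rw [← hcard, ← Set.ncard_coe_finset]
  exact Set.ncard_le_ncard_of_injOn grid hmaps hinj.injOn hS

end Counting

section Plane

variable {S : Set (ZLat 2)} {a b a' b' : ℤ}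

theorem mem_of_horizontal (hS : ∀ e ∈ Evec 2, IsCompressed e S) (hab : ![a, b] ∈ S)
    (ha : |a'| < |a| ∨ a' = |a|) : ![a', b] ∈ S := by
  have hgen := isGenerator_stdVec (0 : Fin 2)
  have hpair : pairing (stdVec 2 0) ![a, b] = 2 * a := by
    simpa using hgen.dotProduct_self_mul_pairing ![a, b]
  convert (hS _ (Or.inl ⟨0, rfl⟩)).add_zsmul_mem hgen hab (a' - a) (by rw [hpair]; grind) using 1
  ext i
  fin_cases i <;> simp

theorem mem_of_vertical (hS : ∀ e ∈ Evec 2, IsCompressed e S) (hab : ![a, b] ∈ S)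
    (hb : |b'| < |b| ∨ b' = |b|) : ![a, b'] ∈ S := by
  have hgen := isGenerator_stdVec (1 : Fin 2)
  have hpair : pairing (stdVec 2 1) ![a, b] = 2 * b := by
    simpa using hgen.dotProduct_self_mul_pairing ![a, b]
  convert (hS _ (Or.inl ⟨1, rfl⟩)).add_zsmul_mem hgen hab (b' - b) (by rw [hpair]; grind) using 1
  ext i
  fin_cases i <;> simp

theorem mem_of_antidiagonal (hS : ∀ e ∈ Evec 2, IsCompressed e S) (hab : ![a, b] ∈ S)
    (hsum : a' + b' = a + b) (hdiff : |a' - b'| < |a - b| ∨ a' - b' = |a - b|) :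
    ![a', b'] ∈ S := by
  have hgen := isGenerator_half_sub (zero_ne_one : (0 : Fin 2) ≠ 1)
  have hpair : pairing (fun k => (stdVec 2 0 k - stdVec 2 1 k) / 2) ![a, b] = a - b := by
    simpa using hgen.dotProduct_self_mul_pairing ![a, b]
  convert (hS _ (Or.inr (Or.inr ⟨0, 1, zero_lt_one, rfl⟩))).add_zsmul_mem hgen hab (a' - a)
    (by rw [hpair]; grind) using 1
  obtain rfl : b' = b + (a - a') := by omega
  ext i
  fin_cases i <;> simp

theorem eq_vecCons_apply {α : Type*} (x : Fin 2 → α) : x = ![x 0, x 1] := by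
  ext i
  fin_cases i <;> rfl

theorem abs_apply_zero_mem (hS : ∀ e ∈ Evec 2, IsCompressed e S) {x : ZLat 2} (hx : x ∈ S)
    (i : Fin 2) : ![|x i|, 0] ∈ S := by
  have hzero (m : ℤ) : |0| < |m| ∨ 0 = |m| := by
    rw [abs_zero]
    exact (abs_nonneg m).lt_or_eq
  rw [eq_vecCons_apply x] at hx
  fin_cases i
  · have hfoot : ![x 0, 0] ∈ S := mem_of_vertical hS hx (hzero _)
    exact mem_of_horizontal hS hfoot (Or.inr rfl)
  · have hfoot : ![0, x 1] ∈ S := mem_of_horizontal hS hx (hzero _)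
    have hpos : ![0, |x 1|] ∈ S := mem_of_vertical hS hfoot (Or.inr rfl)
    exact mem_of_antidiagonal hS hpos (by simp) (by simp)

theorem VdiaI_subset_of_mem (hS : ∀ e ∈ Evec 2, IsCompressed e S) {x : ZLat 2} (hx : x ∈ S)
    (i : Fin 2) : VdiaI 2 (|x i| - 2) ⊆ S := by
  intro y hy
  simp only [VdiaI, Set.mem_ofPred_eq, Fin.sum_univ_two, Int.natCast_natAbs] at hy
  have hanti : ![|x i| - (|y 1| + 1), |y 1| + 1] ∈ S :=
    mem_of_antidiagonal hS (abs_apply_zero_mem hS hx i) (by ring) (by grind)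
  have hhor : ![y 0, |y 1| + 1] ∈ S := mem_of_horizontal hS hanti (by grind)
  rw [eq_vecCons_apply y]
  exact mem_of_vertical hS hhor (by grind)

theorem VdiaI_subset_of_lt_ncard (hS : ∀ e ∈ Evec 2, IsCompressed e S) {l : ℕ}
    (hl : (2 * l + 3) ^ 2 < S.ncard) : VdiaI 2 l ⊆ S := by
  have hcard : (VboxI 2 (l + 1 : ℕ)).ncard < S.ncard := by
    rwa [ncard_VboxI, show 2 * (l + 1) + 1 = 2 * l + 3 by ring]
  obtain ⟨x, hx, hx_notMem⟩ := Set.exists_mem_notMem_of_ncard_lt_ncard hcard (finite_VboxI _ _)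
  simp only [VboxI, Set.mem_ofPred_eq, not_forall, not_le] at hx_notMem
  obtain ⟨i, hi⟩ := hx_notMem
  exact (VdiaI_mono (by omega)).trans (VdiaI_subset_of_mem hS hx i)

theorem subset_VboxI_of_ncard_lt (hS : ∀ e ∈ Evec 2, IsCompressed e S) (hfin : S.Finite) {l : ℕ}
    (hl : S.ncard < (l + 1) ^ 2 + l ^ 2) : S ⊆ VboxI 2 (l + 1) := by
  intro x hx i
  by_contra! hi
  have hsub : VdiaI 2 l ⊆ S := (VdiaI_mono (by omega)).trans (VdiaI_subset_of_mem hS hx i)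
  exact (sq_add_sq_le_ncard_of_VdiaI_subset hfin hsub).not_gt hl

theorem VdiaI_floor_subset (hS : ∀ e ∈ Evec 2, IsCompressed e S) :
    VdiaI 2 ⌊(√(S.ncard : ℝ) - 5) / 2⌋ ⊆ S := by
  intro y hy
  set l : ℕ := ∑ i, (y i).natAbs with hl
  have hl_le : (l : ℝ) ≤ (√(S.ncard : ℝ) - 5) / 2 := by
    have hfloor : (l : ℤ) ≤ ⌊(√(S.ncard : ℝ) - 5) / 2⌋ := by
      rw [hl, Nat.cast_sum]
      exact hy
    exact_mod_cast Int.le_floor.1 hfloor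
  have hlt : (2 * l + 3 : ℝ) < √S.ncard := by linarith
  have hsq : (2 * l + 3) ^ 2 < S.ncard := by exact_mod_cast (Real.lt_sqrt (by positivity)).1 hlt
  exact VdiaI_subset_of_lt_ncard hS hsq (by simp [VdiaI, hl])

theorem subset_VboxI_ceil (hS : ∀ e ∈ Evec 2, IsCompressed e S) (hfin : S.Finite) :
    S ⊆ VboxI 2 (⌈√(S.ncard / 2 : ℝ)⌉ + 2) := by
  rw [← Int.natCast_ceil_eq_ceil (Real.sqrt_nonneg _)]
  set r : ℕ := ⌈√(S.ncard / 2 : ℝ)⌉₊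
  have hhalf : (S.ncard / 2 : ℝ) ≤ r ^ 2 :=
    (Real.sqrt_le_left (by positivity)).1 (Nat.le_ceil _)
  have hcard : S.ncard ≤ 2 * r ^ 2 := by
    have : (S.ncard : ℝ) ≤ 2 * r ^ 2 := by linarith
    exact_mod_cast this
  have hsub : S ⊆ VboxI 2 ((r + 1 : ℕ) + 1) := subset_VboxI_of_ncard_lt hS hfin
    (hcard.trans_lt (by nlinarith [r.zero_le]))
  rwa [Nat.cast_add_one, add_assoc, one_add_one_eq_two] at hsub

theorem stmt3_general {u : ZLat 2 → NNReal} (hu : (Function.support u).Finite) :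
    VdiaI 2 ⌊(√((Function.support u).ncard : ℝ) - 5) / 2⌋ ⊆ Function.support (RZd 2 u) ∧
      Function.support (RZd 2 u) ⊆ VboxI 2 (⌈√((Function.support u).ncard / 2 : ℝ)⌉ + 2) := by
  obtain ⟨hfin, hcard⟩ := support_RZd hu
  have hS : ∀ e ∈ Evec 2, IsCompressed e (Function.support (RZd 2 u)) :=
    fun _ => isCompressed_support_RZd hu
  rw [← hcard]
  generalize Function.support (RZd 2 u) = S at hfin hS
  exact ⟨VdiaI_floor_subset hS, subset_VboxI_ceil hS hfin⟩

end Plane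

/-- For finitely supported `u` on ℤ² with |supp u| = N large enough,
V◇_{⌊(√N−5)/2⌋} ⊆ supp u* ⊆ V□_{⌈√(N/2)⌉+2}. -/
theorem stmt3 :
    ∃ N₀ : ℕ, ∀ u : ZLat 2 → NNReal, (Function.support u).Finite →
      ∀ N : ℕ, (Function.support u).ncard = N → N₀ ≤ N →
        VdiaI 2 ⌊(Real.sqrt N - 5) / 2⌋ ⊆ Function.support (RZd 2 u) ∧
        Function.support (RZd 2 u) ⊆ VboxI 2 (⌈Real.sqrt ((N : ℝ) / 2)⌉ + 2) :=
  ⟨0, fun _ hu _ hN _ => hN ▸ stmt3_general hu⟩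

end
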